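/- Let A : ℝ^d → ℝ^{d×d} be Y-periodic and measurable, with det A > 0 a.e. and |A|, |A^{-1}| ≤ L a.e., and suppose A = Da a.e. for a continuous map a ∈ W^{1,∞}_loc(ℝ^d, ℝ^d) with a(0)=0 that is a Bilipschitz homeomorphism of ℝ^d. Then Ā := ∫_Y A(y) dy satisfies det Ā > 0 and Ā^{-1} = (1/|a(Y)|) ∫_{a(Y)} Da^{-1}(z) dz. -/

import Mathlib

/-!
Since `Da` is periodic and `a 0 = 0`, the map `a` satisfies `a (y + k) = a y + M k` for every
integer vector `k` and a fixed matrix `M`. Everything follows from the fact that minors of `Df`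
are null Lagrangians for such equivariant maps: the mean over the cell of `det Df`, of each entry
of `Df`, and of each entry of `adj (Df)` equals the same expression evaluated at `M`.

Neither mollification nor the Piola identity is needed for this. For a Lipschitz equivariant `f`
with linear part `M` and small `t`, the map `y ↦ y + t f(y)` is a homeomorphism, equivariant with
linear part `1 + t M`, so the image of the cell is a fundamental domain of a lattice and has volume
`det (1 + t M)` (`volume_image_Ycell`). The change of variables formula gives
`∫_Y det (1 + t Df) = det (1 + t M)` (`integral_det_one_add_smul`). Both sides are polynomials
in `t`, so their coefficients agree (`integral_coeff_det`): the top coefficient is the determinant,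
and the linear one, the trace, yields the entries of `Df` after multiplying `f` by a matrix unit.
Adding a matrix unit to `Df` changes its determinant by an entry of the adjugate, whence
`integral_adjugate_Dmat`.

Hence `M = Ā` and `det Ā = ∫_Y det A > 0`. By the change of variables `z = a y`, the volume of
`a(Y)` is `det Ā`, and `∫_{a(Y)} Da⁻¹ = ∫_Y det A • A⁻¹ = ∫_Y adj A = adj Ā`.
-/

open MeasureTheory

noncomputable def Dmat {d : ℕ} (f : (Fin d → ℝ) → (Fin d → ℝ)) (y : Fin d → ℝ) :
    Matrix (Fin d) (Fin d) ℝ :=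
  LinearMap.toMatrix' (fderiv ℝ f y).toLinearMap

def Ycell (d : ℕ) : Set (Fin d → ℝ) := Set.univ.pi fun _ => Set.Ico (0 : ℝ) 1

/-! ### Equivariant homeomorphisms and the volume of the image of the cell -/

/-- Equivariance of `f` under integer translations, with linear part `M`. -/
def LatticeEquivariant {d : ℕ} (f : (Fin d → ℝ) → (Fin d → ℝ))
    (M : Matrix (Fin d) (Fin d) ℝ) : Prop :=
  ∀ (y : Fin d → ℝ) (k : Fin d → ℤ),
    f (y + (fun i => (k i : ℝ))) = f y + M.mulVec (fun i => (k i : ℝ))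

lemma measurableSet_Ycell (d : ℕ) : MeasurableSet (Ycell d) :=
  MeasurableSet.univ_pi fun _ => measurableSet_Ico

lemma volume_Ycell (d : ℕ) : volume (Ycell d) = 1 := by
  simp [Ycell, Real.volume_pi_Ico]

/-- `M⁻¹ ∘ F` commutes with integer translations, so it maps the unit cell, a fundamental domain of
`ℤ^d`, to another fundamental domain of `ℤ^d`, which has the same volume `1`. -/
lemma volume_image_Ycell {d : ℕ} (F : (Fin d → ℝ) ≃ₜ (Fin d → ℝ)) (hF : Differentiable ℝ F)
    (M : Matrix (Fin d) (Fin d) ℝ) (hM : M.det ≠ 0) (hFM : LatticeEquivariant F M) :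
    volume (F '' Ycell d) = ENNReal.ofReal |M.det| := by
  classical
  have hM' : LinearMap.det (Matrix.toLin' M) ≠ 0 := by rwa [LinearMap.det_toLin']
  let e : (Fin d → ℝ) ≃ₗ[ℝ] (Fin d → ℝ) := LinearMap.equivOfDetNeZero _ hM'
  have he : ∀ v, e v = M.mulVec v := fun v => by
    change Matrix.toLin' M v = _
    simp
  let G : (Fin d → ℝ) ≃ (Fin d → ℝ) := F.toEquiv.trans e.symm.toEquiv
  have hG : ∀ v, G v = e.symm (F v) := fun v => rfl
  have hGd : Differentiable ℝ G := by
    have : Differentiable ℝ (e.symm.toContinuousLinearEquiv : (Fin d → ℝ) → (Fin d → ℝ)) :=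
      e.symm.toContinuousLinearEquiv.differentiable
    exact this.comp hF
  have hGm : Measurable G.symm := by
    have h1 : Continuous (e : (Fin d → ℝ) → (Fin d → ℝ)) := e.toContinuousLinearEquiv.continuous
    exact (F.symm.continuous.comp h1).measurable
  have hfund := ZSpan.isAddFundamentalDomain' (Pi.basisFun ℝ (Fin d)) volume
  have hfund' := hfund.image_of_equiv (ν := volume) G
    ⟨hGm, by
      refine Measure.AbsolutelyContinuous.mk fun s hs h0 => ?_
      rw [Measure.map_apply hGm hs, ← G.image_eq_preimage_symm]
      exact addHaar_image_eq_zero_of_differentiableOn_of_addHaar_eq_zero volume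
        hGd.differentiableOn h0⟩ (Equiv.refl _) (by
      rintro ⟨g, hg⟩ x
      rw [Submodule.mem_toAddSubgroup, Module.Basis.mem_span_iff_repr_mem] at hg
      choose k hk using hg
      have hgk : g = fun i => (k i : ℝ) := by
        ext i; simpa using (hk i).symm
      change G (g + x) = g + G x
      rw [hG, hG, hgk, add_comm, hFM, map_add, add_comm, ← he, e.symm_apply_apply])
  have : Countable (Submodule.span ℤ (Set.range (Pi.basisFun ℝ (Fin d)))).toAddSubgroup :=
    inferInstanceAs (Countable (Submodule.span ℤ (Set.range (Pi.basisFun ℝ (Fin d)))))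
  have hvol := hfund.measure_eq hfund'
  rw [ZSpan.fundamentalDomain_pi_basisFun] at hvol
  change volume (Ycell d) = volume (G '' Ycell d) at hvol
  have him : F '' Ycell d = Matrix.toLin' M '' (G '' Ycell d) := by
    rw [← Set.image_comp]
    refine Set.image_congr fun x _ => ?_
    change F x = e (e.symm (F x))
    simp
  rw [him, Measure.addHaar_image_linearMap, ← hvol, volume_Ycell, LinearMap.det_toLin', mul_one]

/-! ### Coefficients of `det (1 + X N)` -/

lemma continuous_coeff_det {d : ℕ} (k : ℕ) :
    Continuous fun N : Matrix (Fin d) (Fin d) ℝ =>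
      (1 + (Polynomial.X : Polynomial ℝ) • N.map Polynomial.C).det.coeff k := by
  have hprod : ∀ (s : Finset (Fin d)) (p : Fin d → Matrix (Fin d) (Fin d) ℝ → Polynomial ℝ),
      (∀ i k, Continuous fun N => (p i N).coeff k) →
      ∀ k, Continuous fun N => (∏ i ∈ s, p i N).coeff k := by
    intro s p hp
    induction s using Finset.induction_on with
    | empty => intro k; simpa using continuous_const
    | insert i s hi ih =>
      intro k
      simp only [Finset.prod_insert hi, Polynomial.coeff_mul]
      exact continuous_finsetSum _ fun x _ => (hp i _).mul (ih _)
  simp only [Matrix.det_apply, Polynomial.finsetSum_coeff]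
  refine continuous_finsetSum _ fun σ _ => ?_
  simp only [Units.smul_def, Polynomial.coeff_smul]
  simp only [zsmul_eq_mul]
  refine continuous_const.mul (hprod Finset.univ
    (fun i N => (1 + (Polynomial.X : Polynomial ℝ) • N.map Polynomial.C) (σ i) i)
    (fun i k => ?_) k)
  simp only [Matrix.add_apply, Matrix.smul_apply, Matrix.map_apply, smul_eq_mul,
    Polynomial.coeff_add]
  refine continuous_const.add ?_
  cases k with
  | zero => simpa using continuous_const
  | succ k =>
    simp only [Polynomial.coeff_X_mul, Polynomial.coeff_C]
    split_ifs
    · exact continuous_id.matrix_elem _ _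
    · exact continuous_const

lemma eval_det_one_add {d : ℕ} (N : Matrix (Fin d) (Fin d) ℝ) (t : ℝ) :
    (1 + (Polynomial.X : Polynomial ℝ) • N.map Polynomial.C).det.eval t = (1 + t • N).det := by
  rw [← Polynomial.coe_evalRingHom, RingHom.map_det]
  congr 1
  ext i j
  simp [Matrix.one_apply, apply_ite]
  ring

lemma natDegree_det_le {d : ℕ} (N : Matrix (Fin d) (Fin d) ℝ) :
    (1 + (Polynomial.X : Polynomial ℝ) • N.map Polynomial.C).det.natDegree ≤ d := by
  have := Polynomial.natDegree_det_X_add_C_le N 1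
  simpa [add_comm] using this

lemma coeff_det_card {d : ℕ} (N : Matrix (Fin d) (Fin d) ℝ) :
    (1 + (Polynomial.X : Polynomial ℝ) • N.map Polynomial.C).det.coeff d = N.det := by
  have := Polynomial.coeff_det_X_add_C_card N 1
  simpa [add_comm] using this

/-! ### The Jacobian matrix -/

lemma Dmat_apply {d : ℕ} (f : (Fin d → ℝ) → (Fin d → ℝ)) (y : Fin d → ℝ) (i j : Fin d) :
    Dmat f y i j = fderiv ℝ f y (Pi.single j 1) i := by
  simp [Dmat, LinearMap.toMatrix'_apply]

lemma det_Dmat {d : ℕ} (f : (Fin d → ℝ) → (Fin d → ℝ)) (y : Fin d → ℝ) :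
    (Dmat f y).det = (fderiv ℝ f y).det := by
  simp [Dmat, LinearMap.det_toMatrix', ContinuousLinearMap.det]

/-- The compact set of matrices with entries bounded by `K`. -/
def boundedMatrices (d : ℕ) (K : ℝ) : Set (Matrix (Fin d) (Fin d) ℝ) :=
  {N | ∀ i j, N i j ∈ Set.Icc (-K) K}

lemma continuous_of {d : ℕ} :
    Continuous fun N : Fin d → Fin d → ℝ => (Matrix.of N : Matrix (Fin d) (Fin d) ℝ) :=
  continuous_matrix fun i j => (continuous_apply j).comp (continuous_apply i)

lemma isCompact_boundedMatrices (d : ℕ) (K : ℝ) : IsCompact (boundedMatrices d K) := by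
  have h : IsCompact (Set.univ.pi fun _ : Fin d => Set.univ.pi fun _ : Fin d => Set.Icc (-K) K) :=
    isCompact_univ_pi fun _ => isCompact_univ_pi fun _ => isCompact_Icc
  have h' := h.image (f := fun N => (Matrix.of N : Matrix (Fin d) (Fin d) ℝ)) continuous_of
  convert h' using 1
  ext N
  constructor
  · intro hN
    exact ⟨fun i j => N i j, fun i _ j _ => hN i j, rfl⟩
  · rintro ⟨N, hN, rfl⟩
    exact fun i j => hN i trivial j trivial

lemma Dmat_mem_boundedMatrices {d : ℕ} {f : (Fin d → ℝ) → (Fin d → ℝ)} {K : NNReal}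
    (hf : LipschitzWith K f) (y : Fin d → ℝ) : Dmat f y ∈ boundedMatrices d K := by
  intro i j
  refine abs_le.mp ?_
  rw [Dmat_apply]
  calc |fderiv ℝ f y (Pi.single j 1) i| ≤ ‖fderiv ℝ f y (Pi.single j 1)‖ :=
        norm_le_pi_norm (fderiv ℝ f y (Pi.single j 1)) i
    _ ≤ ‖fderiv ℝ f y‖ * ‖(Pi.single j 1 : Fin d → ℝ)‖ := ContinuousLinearMap.le_opNorm _ _
    _ ≤ K * 1 := by
        gcongr
        · exact norm_fderiv_le_of_lipschitz ℝ hf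
        · rw [Pi.norm_single]; simp
    _ = K := mul_one _

lemma integrableOn_comp_Dmat {d : ℕ} {f : (Fin d → ℝ) → (Fin d → ℝ)} {K : NNReal}
    (hf : LipschitzWith K f) {g : Matrix (Fin d) (Fin d) ℝ → ℝ} (hg : Continuous g) :
    IntegrableOn (fun y => g (Dmat f y)) (Ycell d) := by
  obtain ⟨C, hC⟩ := (isCompact_boundedMatrices d K).exists_bound_of_continuousOn hg.continuousOn
  have hmeas : Measurable fun y => fun i j => Dmat f y i j := by
    refine measurable_pi_lambda _ fun i => measurable_pi_lambda _ fun j => ?_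
    simp only [Dmat_apply]
    exact (measurable_pi_apply i).comp (measurable_fderiv_apply_const ℝ f _)
  have hgm : Measurable fun N : Fin d → Fin d → ℝ => g (Matrix.of N) :=
    (hg.comp continuous_of).measurable
  refine IntegrableOn.of_bound (by simp [volume_Ycell]) (hgm.comp hmeas).aestronglyMeasurable C ?_
  exact ae_of_all _ fun y => hC _ (Dmat_mem_boundedMatrices hf y)

/-! ### Minors are null Lagrangians -/

/-- The bound on `t` makes `y ↦ y + t f(y)` a Lipschitz perturbation of the identity, hence a
homeomorphism; the positivity assumptions remove the absolute values in the change of variables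
formula. -/
lemma integral_det_one_add_smul {d : ℕ} {f : (Fin d → ℝ) → (Fin d → ℝ)} {K : NNReal}
    {M : Matrix (Fin d) (Fin d) ℝ} (hfd : Differentiable ℝ f) (hfl : LipschitzWith K f)
    (hfM : LatticeEquivariant f M) {t : ℝ} (htK : ‖t‖₊ * K < 1) (htM : 0 < (1 + t • M).det)
    (htf : ∀ N ∈ boundedMatrices d K, 0 < (1 + t • N).det) :
    ∫ y in Ycell d, (1 + t • Dmat f y).det = (1 + t • M).det := by
  have hder : ∀ y, HasFDerivAt (fun y => y + t • f y)
      (ContinuousLinearMap.id ℝ (Fin d → ℝ) + t • fderiv ℝ f y) y := fun y =>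
    (hasFDerivAt_id y).add ((hfd y).hasFDerivAt.const_smul t)
  have hdet : ∀ y, (ContinuousLinearMap.id ℝ (Fin d → ℝ) + t • fderiv ℝ f y).det
      = (1 + t • Dmat f y).det := fun y => by
    rw [← (hder y).fderiv, ← det_Dmat]
    simp [Dmat, (hder y).fderiv]
  have happ : ApproximatesLinearOn (fun y => y + t • f y)
      (ContinuousLinearEquiv.refl ℝ (Fin d → ℝ) : (Fin d → ℝ) →L[ℝ] (Fin d → ℝ)) Set.univ
      (‖t‖₊ * K) := by
    intro x _ y _
    have : x + t • f x - (y + t • f y) - (x - y) = t • (f x - f y) := by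
      rw [smul_sub]; abel
    simp only [ContinuousLinearEquiv.coe_refl, ContinuousLinearMap.coe_id', id_eq, this, norm_smul]
    push_cast
    rw [mul_assoc]
    gcongr
    simpa [dist_eq_norm] using hfl.dist_le_mul x y
  have hc : Subsingleton (Fin d → ℝ) ∨ ‖t‖₊ * K <
      ‖((ContinuousLinearEquiv.refl ℝ (Fin d → ℝ)).symm :
        (Fin d → ℝ) →L[ℝ] (Fin d → ℝ))‖₊⁻¹ := by
    rcases subsingleton_or_nontrivial (Fin d → ℝ) with h | h
    · exact Or.inl h
    · right
      have h1 : ‖((ContinuousLinearEquiv.refl ℝ (Fin d → ℝ)).symm :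
        (Fin d → ℝ) →L[ℝ] (Fin d → ℝ))‖₊ = 1 := by
        ext
        simp
      rwa [h1, inv_one]
  let F : (Fin d → ℝ) ≃ₜ (Fin d → ℝ) := happ.toHomeomorph _ hc
  have hF : ∀ y, F y = y + t • f y := fun y => rfl
  have hFd : Differentiable ℝ F := fun y => (hder y).differentiableAt
  have hFM : LatticeEquivariant F (1 + t • M) := by
    intro y k
    rw [hF, hF, hfM, Matrix.add_mulVec, Matrix.one_mulVec, Matrix.smul_mulVec, smul_add]
    abel
  have hvol := volume_image_Ycell F hFd _ htM.ne' hFM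
  have hcov := integral_image_eq_integral_abs_det_fderiv_smul volume (measurableSet_Ycell d)
    (fun y _ => (hder y).hasFDerivWithinAt) (F.injective.injOn) (fun _ => (1 : ℝ))
  have him : ((fun y => y + t • f y) '' Ycell d) = F '' Ycell d := rfl
  rw [him] at hcov
  simp only [integral_const, smul_eq_mul, mul_one, measureReal_restrict_apply_univ, hdet] at hcov
  rw [measureReal_def, hvol, ENNReal.toReal_ofReal (abs_nonneg _), abs_of_pos htM] at hcov
  rw [hcov]
  refine integral_congr_ae (ae_of_all _ fun y => ?_)
  exact (abs_of_pos (htf _ (Dmat_mem_boundedMatrices hfl y))).symm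

/-- Comparison of coefficients in `∫_Y det (1 + t Df) = det (1 + t M)`, which holds for all `t` near
`0`; the positivity of `det (1 + t Df)` is uniform in `y` by compactness. -/
lemma integral_coeff_det {d : ℕ} {f : (Fin d → ℝ) → (Fin d → ℝ)} {K : NNReal}
    {M : Matrix (Fin d) (Fin d) ℝ} (hfd : Differentiable ℝ f) (hfl : LipschitzWith K f)
    (hfM : LatticeEquivariant f M) {k : ℕ} (hk : k ≤ d) :
    ∫ y in Ycell d, (1 + (Polynomial.X : Polynomial ℝ) • (Dmat f y).map Polynomial.C).det.coeff k
      = (1 + (Polynomial.X : Polynomial ℝ) • M.map Polynomial.C).det.coeff k := by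
  have hint := fun k => integrableOn_comp_Dmat hfl (continuous_coeff_det (d := d) k)
  have hcont : Continuous fun p : ℝ × Matrix (Fin d) (Fin d) ℝ => (1 + p.1 • p.2).det := by
    fun_prop
  have hev : ∀ᶠ t : ℝ in nhds 0,
      ∫ y in Ycell d, (1 + t • Dmat f y).det = (1 + t • M).det := by
    have h1 : ∀ᶠ t : ℝ in nhds 0, ‖t‖₊ * K < 1 := by
      have : Continuous fun t : ℝ => ‖t‖₊ * K := by fun_prop
      exact this.continuousAt.eventually_lt continuousAt_const (by simp)
    have h2 : ∀ᶠ t : ℝ in nhds 0, 0 < (1 + t • M).det := by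
      have : Continuous fun t : ℝ => (1 + t • M).det := by fun_prop
      exact continuousAt_const.eventually_lt this.continuousAt (by simp)
    have h3 : ∀ᶠ t : ℝ in nhds 0, ∀ N ∈ boundedMatrices d K, 0 < (1 + t • N).det := by
      refine (isCompact_boundedMatrices d K).eventually_forall_of_forall_eventually
        (P := fun (t : ℝ) N => 0 < (1 + t • N).det) fun N _ => ?_
      exact continuousAt_const.eventually_lt hcont.continuousAt (by simp)
    filter_upwards [h1, h2, h3] with t ht1 ht2 ht3
    exact integral_det_one_add_smul hfd hfl hfM ht1 ht2 ht3
  let P : Polynomial ℝ := ∑ k ∈ Finset.range (d + 1), Polynomial.monomial k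
    (∫ y in Ycell d,
      (1 + (Polynomial.X : Polynomial ℝ) • (Dmat f y).map Polynomial.C).det.coeff k)
  have hP : ∀ t, P.eval t = ∫ y in Ycell d, (1 + t • Dmat f y).det := by
    intro t
    simp only [P, Polynomial.eval_finsetSum, Polynomial.eval_monomial]
    simp only [← eval_det_one_add]
    simp only [fun y => Polynomial.eval_eq_sum_range' (Nat.lt_succ_of_le
      (natDegree_det_le (Dmat f y))) t]
    rw [integral_finsetSum _ fun k _ => (hint k).mul_const _]
    simp only [integral_mul_const]
  have hPM : P = (1 + (Polynomial.X : Polynomial ℝ) • M.map Polynomial.C).det := by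
    refine Polynomial.eq_of_infinite_eval_eq _ _ (infinite_of_mem_nhds (0 : ℝ) ?_)
    filter_upwards [hev] with t ht
    change P.eval t = _
    rw [hP, ht, eval_det_one_add]
  rw [← hPM]
  simp only [P, Polynomial.finsetSum_coeff, Polynomial.coeff_monomial]
  rw [Finset.sum_ite_eq' (Finset.range (d + 1)) k, if_pos (Finset.mem_range.2 (by omega))]

lemma integral_det_Dmat {d : ℕ} {f : (Fin d → ℝ) → (Fin d → ℝ)} {K : NNReal}
    {M : Matrix (Fin d) (Fin d) ℝ} (hfd : Differentiable ℝ f) (hfl : LipschitzWith K f)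
    (hfM : LatticeEquivariant f M) : ∫ y in Ycell d, (Dmat f y).det = M.det := by
  simpa only [coeff_det_card] using integral_coeff_det hfd hfl hfM le_rfl

lemma Dmat_mulVec_comp {d : ℕ} {f : (Fin d → ℝ) → (Fin d → ℝ)} (hfd : Differentiable ℝ f)
    (B : Matrix (Fin d) (Fin d) ℝ) (y : Fin d → ℝ) :
    Dmat (fun y => B.mulVec (f y)) y = B * Dmat f y := by
  have h : HasFDerivAt (fun y => B.mulVec (f y))
      ((Matrix.toLin' B).toContinuousLinearMap.comp (fderiv ℝ f y)) y :=
    (Matrix.toLin' B).toContinuousLinearMap.hasFDerivAt.comp y (hfd y).hasFDerivAt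
  rw [Dmat, h.fderiv, Dmat]
  change LinearMap.toMatrix' ((Matrix.toLin' B) ∘ₗ (fderiv ℝ f y).toLinearMap) = _
  rw [LinearMap.toMatrix'_comp, LinearMap.toMatrix'_toLin']

lemma Dmat_add_mulVec {d : ℕ} {f : (Fin d → ℝ) → (Fin d → ℝ)} (hfd : Differentiable ℝ f)
    (B : Matrix (Fin d) (Fin d) ℝ) (y : Fin d → ℝ) :
    Dmat (fun y => f y + B.mulVec y) y = Dmat f y + B := by
  have h : HasFDerivAt (fun y => f y + B.mulVec y)
      (fderiv ℝ f y + (Matrix.toLin' B).toContinuousLinearMap) y :=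
    (hfd y).hasFDerivAt.add (Matrix.toLin' B).toContinuousLinearMap.hasFDerivAt
  rw [Dmat, h.fderiv, Dmat]
  change LinearMap.toMatrix' ((fderiv ℝ f y).toLinearMap + Matrix.toLin' B) = _
  rw [map_add, LinearMap.toMatrix'_toLin']

lemma differentiable_mulVec {d : ℕ} (B : Matrix (Fin d) (Fin d) ℝ) :
    Differentiable ℝ fun y : Fin d → ℝ => B.mulVec y :=
  (Matrix.toLin' B).toContinuousLinearMap.differentiable

lemma lipschitz_mulVec {d : ℕ} (B : Matrix (Fin d) (Fin d) ℝ) :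
    ∃ K : NNReal, LipschitzWith K fun y : Fin d → ℝ => B.mulVec y :=
  ⟨_, (Matrix.toLin' B).toContinuousLinearMap.lipschitz⟩

/-- The linear coefficient of `det (1 + X N)` is `tr N`; applied to `E f` with the matrix unit
`E = single j i 1`, for which `tr (E N) = N i j`. -/
lemma integral_Dmat {d : ℕ} {f : (Fin d → ℝ) → (Fin d → ℝ)} {K : NNReal}
    {M : Matrix (Fin d) (Fin d) ℝ} (hfd : Differentiable ℝ f) (hfl : LipschitzWith K f)
    (hfM : LatticeEquivariant f M) (i j : Fin d) : ∫ y in Ycell d, Dmat f y i j = M i j := by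
  obtain ⟨K', hK'⟩ := lipschitz_mulVec (Matrix.single j i (1 : ℝ))
  have hd : 1 ≤ d := by have := i.2; omega
  have hM' : LatticeEquivariant (fun y => (Matrix.single j i (1 : ℝ)).mulVec (f y))
      (Matrix.single j i 1 * M) := by
    intro y k
    simp only [hfM y k, Matrix.mulVec_add, Matrix.mulVec_mulVec]
  have := integral_coeff_det ((differentiable_mulVec _).comp hfd) (hK'.comp hfl) hM' hd
  simpa only [Function.comp_def, Dmat_mulVec_comp hfd, Matrix.coeff_det_one_add_X_smul_one,
    Matrix.trace_single_mul, one_smul] using this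

lemma det_add_single {d : ℕ} (N : Matrix (Fin d) (Fin d) ℝ) (i j : Fin d) :
    (N + Matrix.single j i 1).det = N.det + N.adjugate i j := by
  have h : N + Matrix.single j i 1 = N.updateRow j (N j + Pi.single i 1) := by
    ext p q
    rcases eq_or_ne p j with rfl | hp
    · simp [Matrix.single_apply, Pi.single_apply, eq_comm]
    · simp [hp, hp.symm]
  rw [h, Matrix.det_updateRow_add, Matrix.updateRow_eq_self, Matrix.adjugate_apply]

/-- Comparison of the determinant formula for `f` and for `y ↦ f y + E y` with a matrix unit `E`. -/
lemma integral_adjugate_Dmat {d : ℕ} {f : (Fin d → ℝ) → (Fin d → ℝ)} {K : NNReal}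
    {M : Matrix (Fin d) (Fin d) ℝ} (hfd : Differentiable ℝ f) (hfl : LipschitzWith K f)
    (hfM : LatticeEquivariant f M) (i j : Fin d) :
    ∫ y in Ycell d, (Dmat f y).adjugate i j = M.adjugate i j := by
  obtain ⟨K', hK'⟩ := lipschitz_mulVec (Matrix.single j i (1 : ℝ))
  have hM' : LatticeEquivariant (fun y => f y + (Matrix.single j i (1 : ℝ)).mulVec y)
      (M + Matrix.single j i 1) := by
    intro y k
    simp only [hfM y k, Matrix.mulVec_add, Matrix.add_mulVec]
    abel
  have h := integral_det_Dmat (hfd.add (differentiable_mulVec _)) (hfl.add hK') hM'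
  have h0 := integral_det_Dmat hfd hfl hfM
  have h1 : IntegrableOn (fun y => (Dmat f y).det) (Ycell d) :=
    integrableOn_comp_Dmat hfl (g := fun N => N.det) (by fun_prop)
  have h2 : IntegrableOn (fun y => (Dmat f y).adjugate i j) (Ycell d) :=
    integrableOn_comp_Dmat hfl (g := fun N => N.adjugate i j)
      ((Continuous.matrix_adjugate continuous_id).matrix_elem i j)
  change ∫ y in Ycell d, (Dmat (fun y => f y + (Matrix.single j i (1 : ℝ)).mulVec y) y).det = _ at h
  simp only [Dmat_add_mulVec hfd, det_add_single] at h
  rw [integral_add h1 h2, h0] at h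
  linarith

/-! ### Equivariance of maps with periodic derivative -/

/-- For integer `k` the map `y ↦ a (y + k) - a y` has zero derivative, so it equals `a k`; hence `a`
is additive on `ℤ^d`, and the columns of `M` are the vectors `a e_j`. -/
lemma exists_latticeEquivariant {d : ℕ} {a : (Fin d → ℝ) → (Fin d → ℝ)} (ha0 : a 0 = 0)
    (had : Differentiable ℝ a)
    (hper : ∀ (y : Fin d → ℝ) (k : Fin d → ℤ), Dmat a (y + (fun i => (k i : ℝ))) = Dmat a y) :
    ∃ M, LatticeEquivariant a M := by
  have hadd : ∀ (y : Fin d → ℝ) (k : Fin d → ℤ),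
      a (y + (fun i => (k i : ℝ))) = a y + a (fun i => (k i : ℝ)) := by
    intro y k
    have hder : ∀ y, HasFDerivAt (fun y => a (y + (fun i => (k i : ℝ))) - a y)
        (0 : (Fin d → ℝ) →L[ℝ] (Fin d → ℝ)) y := by
      intro y
      have h := ((hasFDerivAt_comp_add_right (fun i => (k i : ℝ))).2
        (had (y + (fun i => (k i : ℝ)))).hasFDerivAt).sub (had y).hasFDerivAt
      have h0 : fderiv ℝ a (y + (fun i => (k i : ℝ))) = fderiv ℝ a y := by
        have := hper y k
        exact ContinuousLinearMap.coe_injective (LinearMap.toMatrix'.injective this)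
      rwa [h0, sub_self] at h
    have h := is_const_of_fderiv_eq_zero (𝕜 := ℝ) (fun y => (hder y).differentiableAt)
      (fun y => (hder y).fderiv) y 0
    simp only [zero_add, ha0, sub_zero] at h
    rw [← h]; abel
  let φ : (Fin d → ℤ) →+ (Fin d → ℝ) :=
    { toFun := fun k => a (fun i => (k i : ℝ))
      map_zero' := by
        rw [← ha0]; congr 1; ext i; simp
      map_add' := fun k l => by
        rw [← hadd]; congr 1; ext i; simp }
  refine ⟨Matrix.of fun i j => φ (Pi.single j 1) i, fun y k => ?_⟩
  rw [hadd]
  congr 1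
  have hsum : k = ∑ j, k j • (Pi.single j 1 : Fin d → ℤ) := by
    simpa [← Pi.single_smul] using (Finset.univ_sum_single k).symm
  change φ k = _
  conv_lhs => rw [hsum, map_sum]
  simp only [map_zsmul]
  ext i
  simp [Matrix.mulVec, dotProduct, mul_comm]

/-! ### The determinant and inverse of the mean -/

/-- Let `A` be `Y`-periodic, measurable, with `det A > 0` and `|A|, |A⁻¹| ≤ L` a.e.,
and suppose `A = Da` for a Bilipschitz homeomorphism `a` of `ℝ^d` with `a 0 = 0` whose
inverse `a⁻¹` is differentiable.  Then `Ā = ∫_Y A` has positive determinant and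
`Ā⁻¹ = (1/|a(Y)|) ∫_{a(Y)} Da⁻¹(z) dz`. -/
theorem stmt8 {d : ℕ} (L : ℝ) (hL : 1 ≤ L)
    (A : (Fin d → ℝ) → Matrix (Fin d) (Fin d) ℝ) (hmeas : ∀ i j, Measurable fun y => A y i j)
    (hper : ∀ (y : Fin d → ℝ) (k : Fin d → ℤ), A (y + (fun i => (k i : ℝ))) = A y)
    (hdet : ∀ᵐ y, 0 < (A y).det)
    (hbound : ∀ᵐ y, (∀ i j, |A y i j| ≤ L) ∧ (∀ i j, |(A y)⁻¹ i j| ≤ L))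
    (a ainv : (Fin d → ℝ) → (Fin d → ℝ))
    (hcont : Continuous a) (ha0 : a 0 = 0) (hdiff : Differentiable ℝ a)
    (hDa : ∀ y, Dmat a y = A y)
    (hlip : LipschitzWith L.toNNReal a) (hanti : AntilipschitzWith L.toNNReal a)
    (hinv : Function.LeftInverse ainv a ∧ Function.RightInverse ainv a)
    (hinvdiff : Differentiable ℝ ainv)
    (Abar : Matrix (Fin d) (Fin d) ℝ)
    (hAbar : ∀ i j, Abar i j = ∫ y in Ycell d, A y i j) :
    0 < Abar.det ∧
      ∀ i j, Abar⁻¹ i j =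
        (volume (a '' Ycell d)).toReal⁻¹ * ∫ z in a '' Ycell d, Dmat ainv z i j := by
  obtain ⟨M, hM⟩ := exists_latticeEquivariant ha0 hdiff (fun y k => by rw [hDa, hDa, hper])
  have hMA : Abar = M := by
    ext i j
    rw [hAbar, ← integral_Dmat hdiff hlip hM i j]
    simp only [hDa]
  have hdetM := integral_det_Dmat hdiff hlip hM
  simp only [hDa] at hdetM
  have hintdet : IntegrableOn (fun y => (A y).det) (Ycell d) := by
    simpa only [hDa] using integrableOn_comp_Dmat hlip (g := fun N => N.det) (by fun_prop)
  have hdet' := ae_restrict_of_ae (s := Ycell d) hdet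
  have hpos : 0 < M.det := by
    rw [← hdetM, integral_pos_iff_support_of_nonneg_ae (hdet'.mono fun y hy => hy.le) hintdet]
    refine pos_iff_ne_zero.2 fun h0 => ?_
    have h1 : ∀ᵐ y ∂volume.restrict (Ycell d), ¬ (y ∈ Function.support fun y => (A y).det) :=
      measure_eq_zero_iff_ae_notMem.1 h0
    have h2 : ∀ᵐ y ∂volume.restrict (Ycell d), False := by
      filter_upwards [h1, hdet'] with y hy1 hy2
      exact hy1 hy2.ne'
    rw [Filter.eventually_false_iff_eq_bot, ae_eq_bot, Measure.restrict_eq_zero, volume_Ycell] at h2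
    exact one_ne_zero h2
  have hcov := fun g : (Fin d → ℝ) → ℝ =>
    integral_image_eq_integral_abs_det_fderiv_smul volume (measurableSet_Ycell d)
      (fun y _ => (hdiff y).hasFDerivAt.hasFDerivWithinAt) (hinv.1.injective.injOn) g
  simp only [← det_Dmat, hDa, smul_eq_mul] at hcov
  have hvol : (volume (a '' Ycell d)).toReal = M.det := by
    have h := hcov fun _ => 1
    simp only [integral_const, smul_eq_mul, mul_one, measureReal_restrict_apply_univ] at h
    rw [← measureReal_def, h, ← hdetM]
    exact integral_congr_ae (hdet'.mono fun y hy => abs_of_pos hy)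
  have hinvA : ∀ y, Dmat ainv (a y) * A y = 1 := by
    intro y
    have h : HasFDerivAt (ainv ∘ a) ((fderiv ℝ ainv (a y)).comp (fderiv ℝ a y)) y :=
      (hinvdiff (a y)).hasFDerivAt.comp y (hdiff y).hasFDerivAt
    have hid : ainv ∘ a = id := funext hinv.1
    rw [hid] at h
    have h' := h.unique (hasFDerivAt_id y)
    rw [← hDa, Dmat, Dmat, ← LinearMap.toMatrix'_comp]
    change LinearMap.toMatrix'
      ((fderiv ℝ ainv (a y)).comp (fderiv ℝ a y)).toLinearMap = 1
    rw [h']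
    exact LinearMap.toMatrix'_id
  rw [hMA]
  refine ⟨hpos, fun i j => ?_⟩
  rw [hvol, hcov, Matrix.inv_def, Matrix.smul_apply, Ring.inverse_eq_inv', smul_eq_mul,
    ← integral_adjugate_Dmat hdiff hlip hM i j]
  congr 1
  refine integral_congr_ae (hdet'.mono fun y hy => ?_)
  -- By Cramer's rule, `det A • A⁻¹` is the adjugate.
  have h : Dmat ainv (a y) = (A y)⁻¹ := (Matrix.inv_eq_left_inv (hinvA y)).symm
  simp only [h, hDa, abs_of_pos hy]
  rw [Matrix.inv_def, Matrix.smul_apply, Ring.inverse_eq_inv', smul_eq_mul,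
    mul_inv_cancel_left₀ hy.ne']
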